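/- For every δ > 0 there exist δ_1, δ_2 ∈ (0, δ) with δ_1 < δ_2, and constants ε > 0 and C > 0, such that for every integer N ≥ 1, every t ∈ [0,1], every ρ ∈ ℝ with x := U_t'(ρ), and all α, β ∈ [0,1] ∩ (1/N)·ℤ satisfying |α − x| < δ_1 and |β − x| ≥ 2·δ_2, one has P_β^N(t,ρ) ≤ C·e^{−ε·N}·P_α^N(t,ρ). -/

import Mathlib

open Set Filter

noncomputable def GP : ℝ → ℝ := fun x => x * Real.log x + (1 - x) * Real.log (1 - x)

noncomputable def Gt (f0 f1 : ℝ → ℝ) (t : ℝ) : ℝ → ℝ :=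
  fun x => GP x + ((1 - t) * f0 x + t * f1 x)

noncomputable def Phase (G : ℝ → ℝ) (α : ℝ) : ℝ → ℝ :=
  fun x => (x - α) * deriv G x - (G x - G α)

noncomputable def Qnorm (G : ℝ → ℝ) (N : ℕ) (α : ℝ) : ℝ :=
  2 * Real.pi * ∫ x in (0:ℝ)..1, Real.exp (-(N : ℝ) * Phase G α x)

noncomputable def RPhase (G : ℝ → ℝ) (α : ℝ) : ℝ → ℝ :=
  fun y => (1 / α) * Phase G α (α * (1 + y))

noncomputable def Leg (G : ℝ → ℝ) (S : Set ℝ) : ℝ → ℝ :=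
  fun ρ => sSup ((fun x => x * ρ - G x) '' S)

noncomputable def QQ (G : ℝ → ℝ) (N : ℕ) (α : ℝ) : ℝ :=
  Qnorm G N α * Real.exp ((N : ℝ) * G α)

noncomputable def Pcal (f0 f1 : ℝ → ℝ) (N : ℕ) (t ρ α : ℝ) : ℝ :=
  Real.exp ((N:ℝ) * (α * ρ - Leg (Gt f0 f1 t) (Set.Icc 0 1) ρ)) / QQ (Gt f0 f1 t) N α

lemma gp_cont : Continuous GP := by
  unfold GP
  have h := Real.continuous_mul_log
  exact h.add (h.comp (continuous_const.sub continuous_id))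

lemma gp_deriv {x : ℝ} (hx : x ∈ Ioo (0:ℝ) 1) :
    HasDerivAt GP (Real.log x - Real.log (1 - x)) x := by
  have h0 : x ≠ 0 := hx.1.ne'
  have h1 : 1 - x ≠ 0 := by linarith [hx.2]
  have a := Real.hasDerivAt_mul_log h0
  have b := (Real.hasDerivAt_mul_log h1).comp x ((hasDerivAt_id x).const_sub 1)
  refine (a.add b).congr_deriv ?_
  ring

lemma gpf_deriv {f : ℝ → ℝ} (hf : ContDiff ℝ (⊤ : ℕ∞) f) {x : ℝ} (hx : x ∈ Ioo (0:ℝ) 1) :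
    HasDerivAt (fun x => GP x + f x) (Real.log x - Real.log (1 - x) + deriv f x) x :=
  (gp_deriv hx).add ((hf.differentiable (by simp)) x).hasDerivAt

lemma gpf_deriv2 {f : ℝ → ℝ} (hf : ContDiff ℝ (⊤ : ℕ∞) f) {x : ℝ} (hx : x ∈ Ioo (0:ℝ) 1) :
    HasDerivAt (deriv (fun x => GP x + f x)) (1 / (x * (1 - x)) + iteratedDeriv 2 f x) x := by
  have h0 : x ≠ 0 := hx.1.ne'
  have h1 : 1 - x ≠ 0 := by linarith [hx.2]
  have e : deriv (fun x => GP x + f x) =ᶠ[nhds x]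
      fun x => Real.log x - Real.log (1 - x) + deriv f x := by
    filter_upwards [isOpen_Ioo.mem_nhds hx] with y hy
    exact (gpf_deriv hf hy).deriv
  refine HasDerivAt.congr_of_eventuallyEq ?_ e
  have a := Real.hasDerivAt_log h0
  have b := (Real.hasDerivAt_log h1).comp x ((hasDerivAt_id x).const_sub 1)
  have hd : Differentiable ℝ (deriv f) := by
    have := hf.differentiable_iteratedDeriv 1 (by norm_num)
    rwa [iteratedDeriv_one] at this
  have c := (hd x).hasDerivAt
  refine ((a.sub b).add c).congr_deriv ?_
  rw [iteratedDeriv_succ, iteratedDeriv_one]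
  field_simp
  ring

lemma gpf_strong {f : ℝ → ℝ} (hf : ContDiff ℝ (⊤ : ℕ∞) f)
    (hG : ∀ x ∈ Ioo (0:ℝ) 1, 0 < iteratedDeriv 2 (fun x => GP x + f x) x) :
    ∃ m > 0, ∀ k ≤ m, ConvexOn ℝ (Icc (0:ℝ) 1) (fun x => (GP x + f x) - k / 2 * x ^ 2) := by
  have h2 : ∀ x ∈ Ioo (0:ℝ) 1, iteratedDeriv 2 (fun x => GP x + f x) x
      = 1 / (x * (1 - x)) + iteratedDeriv 2 f x := by
    intro x hx
    rw [iteratedDeriv_succ, iteratedDeriv_one]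
    exact (gpf_deriv2 hf hx).deriv
  have hc : Continuous (fun x => 1 + x * (1 - x) * iteratedDeriv 2 f x) := by
    have := hf.continuous_iteratedDeriv 2 (WithTop.coe_le_coe.2 (le_top : ((2 : ℕ) : ℕ∞) ≤ ⊤))
    fun_prop
  obtain ⟨z, hz, hmin⟩ := (isCompact_Icc (a := (0:ℝ)) (b := 1)).exists_isMinOn
    ⟨0, by simp⟩ hc.continuousOn
  have hzpos : 0 < 1 + z * (1 - z) * iteratedDeriv 2 f z := by
    rcases eq_or_lt_of_le hz.1 with h | h
    · rw [← h]; simp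
    rcases eq_or_lt_of_le hz.2 with h' | h'
    · rw [h']; simp
    have := hG z ⟨h, h'⟩
    rw [h2 z ⟨h, h'⟩] at this
    have hp : 0 < z * (1 - z) := mul_pos h (by linarith)
    have := mul_pos hp this
    rw [mul_add, mul_one_div_cancel hp.ne'] at this
    exact this
  refine ⟨_, hzpos, fun k hk => ?_⟩
  have d1 : ∀ x ∈ Ioo (0:ℝ) 1, HasDerivAt (fun x => (GP x + f x) - k / 2 * x ^ 2)
      (deriv (fun x => GP x + f x) x - k * x) x := by
    intro x hx
    refine ((gpf_deriv hf hx).differentiableAt.hasDerivAt.sub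
      (((hasDerivAt_id x).pow 2).const_mul (k / 2))).congr_deriv ?_
    simp; ring
  have d2 : ∀ x ∈ Ioo (0:ℝ) 1, HasDerivAt (fun x => deriv (fun x => GP x + f x) x - k * x)
      (1 / (x * (1 - x)) + iteratedDeriv 2 f x - k) x := by
    intro x hx
    refine ((gpf_deriv2 hf hx).sub ((hasDerivAt_id x).const_mul k)).congr_deriv ?_
    simp
  refine convexOn_of_hasDerivWithinAt2_nonneg (convex_Icc 0 1) (f' := fun x => deriv (fun x => GP x + f x) x - k * x) (f'' := fun x => (1 / (x * (1 - x)) + iteratedDeriv 2 f x - k)) ?_ ?_ ?_ ?_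
  · have := gp_cont
    have := hf.continuous
    fun_prop
  · intro x hx
    rw [interior_Icc] at hx
    exact (d1 x hx).hasDerivWithinAt
  · intro x hx
    rw [interior_Icc] at hx
    exact (d2 x hx).hasDerivWithinAt
  · intro x hx
    rw [interior_Icc] at hx
    have hp : 0 < x * (1 - x) := mul_pos hx.1 (by linarith [hx.2])
    have hp1 : x * (1 - x) ≤ 1 := by nlinarith [sq_nonneg x, hx.2]
    have h3 : _ ≤ 1 + x * (1 - x) * iteratedDeriv 2 f x := hmin (Ioo_subset_Icc_self hx)
    have h4 : 1 / (x * (1 - x)) + iteratedDeriv 2 f x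
      = (1 + x * (1 - x) * iteratedDeriv 2 f x) / (x * (1 - x)) := by
      rw [add_div, mul_div_cancel_left₀ _ hp.ne']
    rw [h4, sub_nonneg, le_div_iff₀ hp]
    refine le_trans ?_ h3
    by_cases hk0 : 0 ≤ k
    · nlinarith
    · nlinarith

/-- quadratic growth at a maximizer -/
lemma growth {G : ℝ → ℝ} {m : ℝ}
    (hG : ConvexOn ℝ (Icc (0:ℝ) 1) (fun x => G x - m / 2 * x ^ 2)) {ρ x : ℝ}
    (hx : x ∈ Icc (0:ℝ) 1) (hmax : ∀ y ∈ Icc (0:ℝ) 1, y * ρ - G y ≤ x * ρ - G x)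
    {y : ℝ} (hy : y ∈ Icc (0:ℝ) 1) :
    m / 4 * (y - x) ^ 2 ≤ (x * ρ - G x) - (y * ρ - G y) := by
  have h := hG.2 hx hy (show (0:ℝ) ≤ 1/2 by norm_num) (show (0:ℝ) ≤ 1/2 by norm_num) (by norm_num)
  have h' := hmax ((1/2 : ℝ) • x + (1/2 : ℝ) • y) (hG.1 hx hy (by norm_num) (by norm_num) (by norm_num))
  simp only [smul_eq_mul] at h h'
  nlinarith

lemma leg_deriv {G : ℝ → ℝ} {m : ℝ} (hm : 0 < m)
    (hG : ConvexOn ℝ (Icc (0:ℝ) 1) (fun x => G x - m / 2 * x ^ 2)) {ρ x : ℝ}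
    (hx : x ∈ Icc (0:ℝ) 1) (hmax : ∀ y ∈ Icc (0:ℝ) 1, y * ρ - G y ≤ x * ρ - G x) :
    HasDerivAt (Leg G (Icc 0 1)) x ρ := by
  have ub : ∀ h : ℝ, ∀ y ∈ Icc (0:ℝ) 1,
      y * (ρ + h) - G y ≤ x * ρ - G x + x * h + h ^ 2 / m := by
    intro h y hy
    have g := growth hG hx hmax hy
    have : (y - x) * h - m / 4 * (y - x) ^ 2 ≤ h ^ 2 / m := by
      rw [le_div_iff₀ hm]
      nlinarith [sq_nonneg (m / 2 * (y - x) - h)]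
    linarith
  have hle : ∀ h : ℝ, Leg G (Icc 0 1) (ρ + h) ≤ x * ρ - G x + x * h + h ^ 2 / m := by
    intro h
    refine csSup_le ⟨_, mem_image_of_mem _ hx⟩ ?_
    rintro _ ⟨y, hy, rfl⟩
    exact ub h y hy
  have hge : ∀ h : ℝ, x * (ρ + h) - G x ≤ Leg G (Icc 0 1) (ρ + h) := by
    intro h
    refine le_csSup ⟨x * ρ - G x + x * h + h ^ 2 / m, ?_⟩ ⟨x, hx, rfl⟩
    rintro _ ⟨y, hy, rfl⟩
    exact ub h y hy
  have h0 : Leg G (Icc 0 1) ρ = x * ρ - G x := by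
    have a := hle 0
    have b := hge 0
    simp at a b
    linarith
  rw [hasDerivAt_iff_isLittleO_nhds_zero]
  have hO : (fun h : ℝ => Leg G (Icc 0 1) (ρ + h) - Leg G (Icc 0 1) ρ - h • x)
      =O[nhds 0] fun h => h ^ 2 := by
    refine Asymptotics.IsBigO.of_bound (1 / m) (Eventually.of_forall fun h => ?_)
    have a := hle h
    have b := hge h
    rw [h0, Real.norm_eq_abs, Real.norm_eq_abs, abs_of_nonneg (sq_nonneg h), smul_eq_mul,
      abs_of_nonneg (by linarith)]
    have : 1 / m * h ^ 2 = h ^ 2 / m := by ring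
    linarith
  refine hO.trans_isLittleO ?_
  have := Asymptotics.isLittleO_pow_pow (𝕜 := ℝ) (m := 1) (n := 2) (by norm_num)
  simpa using this

/-- gradient inequality -/
lemma phase_nonneg {G : ℝ → ℝ} (hG : ConvexOn ℝ (Icc (0:ℝ) 1) G) {β y : ℝ}
    (hβ : β ∈ Icc (0:ℝ) 1) (hy : y ∈ Ioo (0:ℝ) 1) (hd : DifferentiableAt ℝ G y) :
    0 ≤ Phase G β y := by
  unfold Phase
  have hy' := Ioo_subset_Icc_self hy
  rcases lt_trichotomy β y with h | h | h
  · have := hG.slope_le_deriv hβ hy' h hd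
    rw [slope_def_field, div_le_iff₀ (by linarith)] at this
    linarith
  · subst h; simp
  · have := hG.deriv_le_slope hy' hβ h hd
    rw [slope_def_field, le_div_iff₀ (by linarith)] at this
    linarith

/-- upper bound for the phase near `β` -/
lemma phase_upper {G : ℝ → ℝ} (hG : ConvexOn ℝ (Icc (0:ℝ) 1) G) {M s η : ℝ}
    (hM : ∀ x ∈ Icc (0:ℝ) 1, |G x| ≤ M) (hs : 0 < s) (hs4 : s ≤ 1 / 4)
    (hω : ∀ x ∈ Icc (0:ℝ) 1, ∀ y ∈ Icc (0:ℝ) 1, |x - y| < s → |G x - G y| ≤ η)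
    (hd : ∀ y ∈ Ioo (0:ℝ) 1, DifferentiableAt ℝ G y)
    {β : ℝ} (hβ : β ∈ Icc (0:ℝ) 1) :
    ∃ a, 0 ≤ a ∧ a + s ≤ 1 ∧ ∀ y ∈ Ioo a (a + s), Phase G β y ≤ 8 * M * s + η := by
  have hM0 : 0 ≤ M := (abs_nonneg _).trans (hM β hβ)
  rcases le_total β (1/2) with h | h
  · refine ⟨β, hβ.1, by linarith, fun y hy => ?_⟩
    have hy1 : y ∈ Ioo (0:ℝ) 1 := ⟨by linarith [hβ.1, hy.1], by linarith [hy.2]⟩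
    have hy' := Ioo_subset_Icc_self hy1
    have hz : β + 1/2 ∈ Icc (0:ℝ) 1 := ⟨by linarith [hβ.1], by linarith⟩
    have := hG.deriv_le_slope hy' hz (by linarith [hy.2]) (hd y hy1)
    have hsl : slope G y (β + 1/2) ≤ 8 * M := by
      rw [slope_def_field, div_le_iff₀ (by linarith [hy.2])]
      have a := abs_le.1 (hM _ hz)
      have b := abs_le.1 (hM _ hy')
      nlinarith [hy.2]
    have hw := abs_le.1 (hω β hβ y hy' (by rw [abs_lt]; constructor <;> linarith [hy.1, hy.2]))
    unfold Phase
    have : (y - β) * deriv G y ≤ 8 * M * s := by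
      have h1 : (y - β) * deriv G y ≤ (y - β) * (8 * M) :=
        mul_le_mul_of_nonneg_left (by linarith) (by linarith [hy.1])
      nlinarith [hy.2]
    linarith
  · refine ⟨β - s, by linarith, by linarith [hβ.2], fun y hy => ?_⟩
    rw [sub_add_cancel] at hy
    have hy1 : y ∈ Ioo (0:ℝ) 1 := ⟨by linarith [hy.1], by linarith [hy.2, hβ.2]⟩
    have hy' := Ioo_subset_Icc_self hy1
    have hz : β - 1/2 ∈ Icc (0:ℝ) 1 := ⟨by linarith, by linarith [hβ.2]⟩
    have := hG.slope_le_deriv hz hy' (by linarith [hy.1]) (hd y hy1)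
    have hsl : -(8 * M) ≤ slope G (β - 1/2) y := by
      rw [slope_def_field, le_div_iff₀ (by linarith [hy.1])]
      have a := abs_le.1 (hM _ hz)
      have b := abs_le.1 (hM _ hy')
      nlinarith [hy.1]
    have hw := abs_le.1 (hω β hβ y hy' (by rw [abs_lt]; constructor <;> linarith [hy.1, hy.2]))
    unfold Phase
    have : (y - β) * deriv G y ≤ 8 * M * s := by
      have h1 : (β - y) * (-deriv G y) ≤ (β - y) * (8 * M) :=
        mul_le_mul_of_nonneg_left (by linarith) (by linarith [hy.2])
      nlinarith [hy.1]
    linarith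

lemma phase_int {G : ℝ → ℝ} (hG : ConvexOn ℝ (Icc (0:ℝ) 1) G) (hc : Continuous G)
    (hd : ∀ y ∈ Ioo (0:ℝ) 1, DifferentiableAt ℝ G y) (N : ℕ)
    {β : ℝ} (hβ : β ∈ Icc (0:ℝ) 1) :
    IntervalIntegrable (fun x => Real.exp (-(N : ℝ) * Phase G β x)) MeasureTheory.volume 0 1 := by
  rw [intervalIntegrable_iff_integrableOn_Ioo_of_le zero_le_one]
  refine MeasureTheory.Measure.integrableOn_of_bounded (M := 1) (by simp) ?_ ?_
  · have : Measurable (fun x => Real.exp (-(N : ℝ) * Phase G β x)) := by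
      unfold Phase
      have := measurable_deriv G
      have := hc.measurable
      fun_prop
    exact this.aestronglyMeasurable
  · refine (MeasureTheory.ae_restrict_iff' measurableSet_Ioo).2 (Eventually.of_forall fun y hy => ?_)
    rw [Real.norm_eq_abs, Real.abs_exp, Real.exp_le_one_iff]
    have := phase_nonneg hG hβ hy (hd y hy)
    have : (0:ℝ) ≤ N * Phase G β y := by positivity
    linarith

lemma q_le {G : ℝ → ℝ} (hG : ConvexOn ℝ (Icc (0:ℝ) 1) G) (hc : Continuous G)
    (hd : ∀ y ∈ Ioo (0:ℝ) 1, DifferentiableAt ℝ G y) (N : ℕ)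
    {β : ℝ} (hβ : β ∈ Icc (0:ℝ) 1) : Qnorm G N β ≤ 2 * Real.pi := by
  unfold Qnorm
  have : ∫ x in (0:ℝ)..1, Real.exp (-(N : ℝ) * Phase G β x) ≤ ∫ x in (0:ℝ)..1, (1:ℝ) := by
    refine intervalIntegral.integral_mono_on_of_le_Ioo zero_le_one (phase_int hG hc hd N hβ)
      (by simp) fun y hy => ?_
    rw [Real.exp_le_one_iff]
    have := phase_nonneg hG hβ hy (hd y hy)
    have : (0:ℝ) ≤ N * Phase G β y := by positivity
    linarith
  simp only [intervalIntegral.integral_const, sub_zero, smul_eq_mul, mul_one] at this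
  nlinarith [Real.pi_pos]

lemma q_ge {G : ℝ → ℝ} (hG : ConvexOn ℝ (Icc (0:ℝ) 1) G) (hc : Continuous G)
    (hd : ∀ y ∈ Ioo (0:ℝ) 1, DifferentiableAt ℝ G y) (N : ℕ) {M s η : ℝ}
    (hM : ∀ x ∈ Icc (0:ℝ) 1, |G x| ≤ M) (hs : 0 < s) (hs4 : s ≤ 1 / 4)
    (hω : ∀ x ∈ Icc (0:ℝ) 1, ∀ y ∈ Icc (0:ℝ) 1, |x - y| < s → |G x - G y| ≤ η)
    {β : ℝ} (hβ : β ∈ Icc (0:ℝ) 1) :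
    2 * Real.pi * (s * Real.exp (-(N:ℝ) * (8 * M * s + η))) ≤ Qnorm G N β := by
  obtain ⟨a, ha, has, hp⟩ := phase_upper hG hM hs hs4 hω hd hβ
  unfold Qnorm
  refine mul_le_mul_of_nonneg_left ?_ (by positivity)
  have hi := phase_int hG hc hd N hβ
  have hsub : IntervalIntegrable (fun x => Real.exp (-(N : ℝ) * Phase G β x))
      MeasureTheory.volume a (a + s) := by
    refine hi.mono_set ?_
    rw [uIcc_of_le (by linarith), uIcc_of_le zero_le_one]
    exact Icc_subset_Icc ha has
  calc s * Real.exp (-(N:ℝ) * (8 * M * s + η))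
      = ∫ x in a..(a + s), Real.exp (-(N:ℝ) * (8 * M * s + η)) := by simp
    _ ≤ ∫ x in a..(a + s), Real.exp (-(N : ℝ) * Phase G β x) := by
        refine intervalIntegral.integral_mono_on_of_le_Ioo (by linarith) (by simp) hsub
          fun y hy => ?_
        rw [Real.exp_le_exp]
        have := mul_le_mul_of_nonneg_left (hp y hy) (Nat.cast_nonneg (α := ℝ) N)
        linarith
    _ ≤ _ := by
        refine intervalIntegral.integral_mono_interval ha (by linarith) has ?_ hi
        exact Eventually.of_forall fun x => (Real.exp_pos _).le

/-- the exponent gap -/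
lemma gap {G : ℝ → ℝ} {m M ω δ₁ δ₂ : ℝ} (hm : 0 < m)
    (hG : ConvexOn ℝ (Icc (0:ℝ) 1) (fun x => G x - m / 2 * x ^ 2))
    (hGc : ConvexOn ℝ (Icc (0:ℝ) 1) G)
    (hM : ∀ x ∈ Icc (0:ℝ) 1, |G x| ≤ M)
    (h1 : 0 < δ₁) (h12 : δ₁ < δ₂)
    (hω : ∀ x ∈ Icc (0:ℝ) 1, ∀ y ∈ Icc (0:ℝ) 1, |x - y| < δ₁ → |G x - G y| ≤ ω)
    (hsm : ω + M * δ₁ / δ₂ ≤ m * δ₂ ^ 2 / 2)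
    {ρ x : ℝ} (hx : x ∈ Icc (0:ℝ) 1) (hmax : ∀ y ∈ Icc (0:ℝ) 1, y * ρ - G y ≤ x * ρ - G x)
    {α β : ℝ} (hα : α ∈ Icc (0:ℝ) 1) (hβ : β ∈ Icc (0:ℝ) 1)
    (hax : |α - x| < δ₁) (hbx : 2 * δ₂ ≤ |β - x|) :
    (β * ρ - G β) - (α * ρ - G α) ≤ -(m * δ₂ ^ 2 / 2) := by
  have h2 : 0 < δ₂ := h1.trans h12
  have gr := growth hG hx hmax hβ
  have hsq : 4 * δ₂ ^ 2 ≤ (β - x) ^ 2 := by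
    rw [← sq_abs (β - x)]; nlinarith
  have hDb : m * δ₂ ^ 2 ≤ (x * ρ - G x) - (β * ρ - G β) := by nlinarith
  have hM0 : 0 ≤ M := (abs_nonneg _).trans (hM β hβ)
  have hxM := abs_le.1 (hM x hx)
  have hbM := abs_le.1 (hM β hβ)
  have hw := abs_le.1 (hω α hα x hx hax)
  have ha' := abs_lt.1 hax
  suffices hs : (x * ρ - G x) - (α * ρ - G α) ≤ ((x * ρ - G x) - (β * ρ - G β)) / 2 ∨
      (x * ρ - G x) - (α * ρ - G α) ≤ m * δ₂ ^ 2 / 2 by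
    rcases hs with hs | hs <;> linarith
  by_cases hside : 0 ≤ (α - x) * (β - x)
  · left
    -- α = (1 - θ) x + θ β
    have hne : β - x ≠ 0 := by
      intro h; rw [h] at hbx; simp at hbx; linarith
    set θ := (α - x) / (β - x) with hθ
    have hθe : θ * (β - x) = α - x := div_mul_cancel₀ _ hne
    have hθ0 : 0 ≤ θ := by
      have : θ = (α - x) * (β - x) / (β - x) ^ 2 := by rw [hθ]; field_simp
      rw [this]; positivity
    have hθ1 : θ ≤ 1 / 2 := by
      have e : |θ| * |β - x| = |α - x| := by rw [← abs_mul, hθe]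
      rw [abs_of_nonneg hθ0] at e
      by_contra hcon
      push Not at hcon
      nlinarith
    have hc := hGc.2 hx hβ (show 0 ≤ 1 - θ by linarith) hθ0 (by ring)
    simp only [smul_eq_mul] at hc
    have hae : (1 - θ) * x + θ * β = α := by linarith
    rw [hae] at hc
    have hDb0 : 0 ≤ (x * ρ - G x) - (β * ρ - G β) := le_trans (by positivity) hDb
    have : (x * ρ - G x) - (α * ρ - G α) ≤ θ * ((x * ρ - G x) - (β * ρ - G β)) := by
      have : α * ρ = ((1 - θ) * x + θ * β) * ρ := by rw [hae]
      rw [this]; linarith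
    nlinarith
  · right
    refine le_trans ?_ hsm
    push Not at hside
    have key : (x - α) * ρ ≤ M * δ₁ / δ₂ := by
      rw [le_div_iff₀ h2]
      have hb := hmax β hβ
      rcases le_total 0 (β - x) with h | h
      · rw [abs_of_nonneg h] at hbx
        have hxa : 0 ≤ x - α := by by_contra hh; nlinarith
        -- (β - x) ρ ≤ G β - G x ≤ 2M
        have hr : (β - x) * ρ ≤ 2 * M := by linarith
        rcases le_total ρ 0 with hρ | hρ
        · have : (x - α) * ρ ≤ 0 := mul_nonpos_of_nonneg_of_nonpos hxa hρ
          have : 0 ≤ M * δ₁ := by positivity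
          nlinarith
        · have : δ₂ * ρ ≤ M := by nlinarith
          have e1 : (x - α) * (δ₂ * ρ) ≤ δ₁ * M :=
            mul_le_mul (by linarith) this (by positivity) h1.le
          linarith
      · rw [abs_of_nonpos h] at hbx
        have hxa : 0 ≤ α - x := by by_contra hh; nlinarith
        have hr : (x - β) * (-ρ) ≤ 2 * M := by linarith
        rcases le_total (-ρ) 0 with hρ | hρ
        · have : (α - x) * (-ρ) ≤ 0 := mul_nonpos_of_nonneg_of_nonpos hxa hρ
          have : 0 ≤ M * δ₁ := by positivity
          nlinarith
        · have : δ₂ * (-ρ) ≤ M := by nlinarith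
          have e1 : (α - x) * (δ₂ * (-ρ)) ≤ δ₁ * M :=
            mul_le_mul (by linarith) this (by positivity) h1.le
          linarith
    linarith

theorem bergman_cp1_localization_lemma
    (f0 f1 : ℝ → ℝ) (hf0 : ContDiff ℝ (⊤ : ℕ∞) f0) (hf1 : ContDiff ℝ (⊤ : ℕ∞) f1)
    (hG0 : ∀ x ∈ Set.Ioo (0:ℝ) 1, 0 < iteratedDeriv 2 (Gt f0 f1 0) x)
    (hG1 : ∀ x ∈ Set.Ioo (0:ℝ) 1, 0 < iteratedDeriv 2 (Gt f0 f1 1) x) :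
    ∀ δ : ℝ, 0 < δ → ∃ δ₁ δ₂ ε C : ℝ,
      0 < δ₁ ∧ δ₁ < δ ∧ 0 < δ₂ ∧ δ₂ < δ ∧ δ₁ < δ₂ ∧ 0 < ε ∧ 0 < C ∧
      ∀ N : ℕ, 1 ≤ N → ∀ t ∈ Set.Icc (0:ℝ) 1, ∀ ρ : ℝ,
        ∀ α ∈ Set.Icc (0:ℝ) 1, ∀ β ∈ Set.Icc (0:ℝ) 1,
          (∃ j : ℕ, α = (j:ℝ) / (N:ℝ)) → (∃ j : ℕ, β = (j:ℝ) / (N:ℝ)) →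
          |α - deriv (Leg (Gt f0 f1 t) (Set.Icc 0 1)) ρ| < δ₁ →
          2 * δ₂ ≤ |β - deriv (Leg (Gt f0 f1 t) (Set.Icc 0 1)) ρ| →
          Pcal f0 f1 N t ρ β ≤ C * Real.exp (-ε * (N:ℝ)) * Pcal f0 f1 N t ρ α := by
  have e0 : Gt f0 f1 0 = fun x => GP x + f0 x := by funext x; simp [Gt]
  have e1 : Gt f0 f1 1 = fun x => GP x + f1 x := by funext x; simp [Gt]
  rw [e0] at hG0
  rw [e1] at hG1
  obtain ⟨m0, hm0, H0⟩ := gpf_strong hf0 hG0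
  obtain ⟨m1, hm1, H1⟩ := gpf_strong hf1 hG1
  have hcomb : ∀ t x, Gt f0 f1 t x = (1 - t) * (GP x + f0 x) + t * (GP x + f1 x) := by
    intro t x; simp only [Gt]; ring
  have c0 : Continuous fun x => GP x + f0 x := gp_cont.add hf0.continuous
  have c1 : Continuous fun x => GP x + f1 x := gp_cont.add hf1.continuous
  have hcont : ∀ t, Continuous (Gt f0 f1 t) := by
    intro t
    rw [funext (hcomb t)]
    exact (continuous_const.mul c0).add (continuous_const.mul c1)
  have hdiff : ∀ t, ∀ y ∈ Ioo (0:ℝ) 1, DifferentiableAt ℝ (Gt f0 f1 t) y := by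
    intro t y hy
    rw [funext (hcomb t)]
    exact ((gpf_deriv hf0 hy).differentiableAt.const_mul _).add
      ((gpf_deriv hf1 hy).differentiableAt.const_mul _)
  have hconv : ∀ k ≤ min m0 m1, ∀ t ∈ Icc (0:ℝ) 1,
      ConvexOn ℝ (Icc (0:ℝ) 1) (fun x => Gt f0 f1 t x - k / 2 * x ^ 2) := by
    intro k hk t ht
    have a := (H0 k (hk.trans (min_le_left _ _))).smul (c := 1 - t) (by linarith [ht.2])
    have b := (H1 k (hk.trans (min_le_right _ _))).smul (c := t) ht.1
    refine (a.add b).congr fun x _ => ?_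
    simp only [hcomb, Pi.add_apply, smul_eq_mul]
    ring
  have hm : 0 < min m0 m1 := lt_min hm0 hm1
  set m := min m0 m1 with hmdef
  have hconv0 : ∀ t ∈ Icc (0:ℝ) 1, ConvexOn ℝ (Icc (0:ℝ) 1) (Gt f0 f1 t) := by
    intro t ht
    have := hconv 0 hm.le t ht
    simpa using this
  obtain ⟨M0, hM0⟩ := (isCompact_Icc (a := (0:ℝ)) (b := 1)).exists_bound_of_continuousOn
    c0.continuousOn
  obtain ⟨M1, hM1⟩ := (isCompact_Icc (a := (0:ℝ)) (b := 1)).exists_bound_of_continuousOn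
    c1.continuousOn
  have hcabs : ∀ t ∈ Icc (0:ℝ) 1, ∀ a b K : ℝ, |a| ≤ K → |b| ≤ K →
      |(1 - t) * a + t * b| ≤ K := by
    intro t ht a b K ha hb
    rw [abs_le] at *
    constructor <;> nlinarith [ht.1, ht.2]
  obtain ⟨M, hMpos, hM⟩ : ∃ M > 0, ∀ t ∈ Icc (0:ℝ) 1, ∀ x ∈ Icc (0:ℝ) 1,
      |Gt f0 f1 t x| ≤ M := by
    refine ⟨max (max M0 M1) 1, by positivity, fun t ht x hx => ?_⟩
    rw [hcomb]
    refine hcabs t ht _ _ _ ((hM0 x hx).trans ?_) ((hM1 x hx).trans ?_) <;> simp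
  have hω : ∀ η > 0, ∃ s > 0, ∀ t ∈ Icc (0:ℝ) 1, ∀ x ∈ Icc (0:ℝ) 1, ∀ y ∈ Icc (0:ℝ) 1,
      |x - y| < s → |Gt f0 f1 t x - Gt f0 f1 t y| ≤ η := by
    intro η hη
    have u0 := (isCompact_Icc (a := (0:ℝ)) (b := 1)).uniformContinuousOn_of_continuous
      c0.continuousOn
    have u1 := (isCompact_Icc (a := (0:ℝ)) (b := 1)).uniformContinuousOn_of_continuous
      c1.continuousOn
    rw [Metric.uniformContinuousOn_iff] at u0 u1
    obtain ⟨s0, hs0, h0⟩ := u0 η hη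
    obtain ⟨s1, hs1, h1⟩ := u1 η hη
    refine ⟨min s0 s1, lt_min hs0 hs1, fun t ht x hx y hy hxy => ?_⟩
    have a := h0 x hx y hy (by rw [Real.dist_eq]; exact hxy.trans_le (min_le_left _ _))
    have b := h1 x hx y hy (by rw [Real.dist_eq]; exact hxy.trans_le (min_le_right _ _))
    rw [Real.dist_eq] at a b
    have := hcabs t ht _ _ _ a.le b.le
    rw [hcomb, hcomb]
    convert this using 2
    ring
  intro δ hδ
  set δ₂ := δ / 2 with hδ₂
  have hδ₂p : 0 < δ₂ := by positivity
  set κ := m * δ₂ ^ 2 / 2 with hκ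
  have hκp : 0 < κ := by positivity
  obtain ⟨r, hr, hrω⟩ := hω (κ / 4) (by positivity)
  -- δ₁
  obtain ⟨δ₁, hδ₁p, hδ₁r, hδ₁2, hδ₁M⟩ : ∃ d > 0, d ≤ r ∧ d < δ₂ ∧ M * d / δ₂ ≤ κ / 4 := by
    refine ⟨min r (min (δ₂ / 2) (κ / 4 * δ₂ / M)), by positivity, min_le_left _ _, ?_, ?_⟩
    · have : min r (min (δ₂ / 2) (κ / 4 * δ₂ / M)) ≤ δ₂ / 2 :=
        (min_le_right _ _).trans (min_le_left _ _)
      linarith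
    · have : min r (min (δ₂ / 2) (κ / 4 * δ₂ / M)) ≤ κ / 4 * δ₂ / M :=
        (min_le_right _ _).trans (min_le_right _ _)
      rw [le_div_iff₀ hMpos] at this
      rw [div_le_iff₀ hδ₂p]
      linarith
  obtain ⟨s, hsp, hsr, hs4, hsM⟩ : ∃ d > 0, d ≤ r ∧ d ≤ 1 / 4 ∧ 8 * M * d ≤ κ / 4 := by
    refine ⟨min r (min (1 / 4) (κ / 4 / (8 * M))), by positivity, min_le_left _ _,
      (min_le_right _ _).trans (min_le_left _ _), ?_⟩
    have : min r (min (1 / 4) (κ / 4 / (8 * M))) ≤ κ / 4 / (8 * M) :=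
        (min_le_right _ _).trans (min_le_right _ _)
    rw [le_div_iff₀ (by positivity)] at this
    linarith
  refine ⟨δ₁, δ₂, κ / 2, 1 / s, hδ₁p, by linarith, hδ₂p, by linarith, hδ₁2, by positivity,
    by positivity, ?_⟩
  intro N _ t ht ρ α hα β hβ _ _ hax hbx
  set G := Gt f0 f1 t with hGdef
  obtain ⟨x, hx, hmax⟩ := (isCompact_Icc (a := (0:ℝ)) (b := 1)).exists_isMaxOn
    ⟨0, by simp⟩ (f := fun y => y * ρ - G y)
    ((continuous_id.mul continuous_const).sub (hcont t)).continuousOn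
  have hmax' : ∀ y ∈ Icc (0:ℝ) 1, y * ρ - G y ≤ x * ρ - G x := fun y hy => hmax hy
  have hder := (leg_deriv hm (hconv m le_rfl t ht) hx hmax').deriv
  rw [hder] at hax hbx
  have hgap := gap hm (hconv m le_rfl t ht) (hconv0 t ht) (hM t ht) hδ₁p hδ₁2
    (ω := κ / 4) (fun x hx y hy h => hrω t ht x hx y hy (h.trans_le hδ₁r))
    (by linarith) hx hmax' hα hβ hax hbx
  have hqa := q_le (hconv0 t ht) (hcont t) (hdiff t) N hα
  have hωs : ∀ x ∈ Icc (0:ℝ) 1, ∀ y ∈ Icc (0:ℝ) 1, |x - y| < s → |G x - G y| ≤ κ / 4 :=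
    fun x hx y hy h => hrω t ht x hx y hy (h.trans_le hsr)
  have hqb := q_ge (hconv0 t ht) (hcont t) (hdiff t) N (hM t ht) hsp hs4 hωs hβ
  have hqa' := q_ge (hconv0 t ht) (hcont t) (hdiff t) N (hM t ht) hsp hs4 hωs hα
  have hqap : 0 < Qnorm G N α := lt_of_lt_of_le (by positivity) hqa'
  have hqbp : 0 < Qnorm G N β := lt_of_lt_of_le (by positivity) hqb
  have hqb2 : 2 * Real.pi * (s * Real.exp (-(N:ℝ) * (κ / 2))) ≤ Qnorm G N β := by
    refine le_trans ?_ hqb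
    have : -(N:ℝ) * (κ / 2) ≤ -(N:ℝ) * (8 * M * s + κ / 4) := by
      have : (N:ℝ) * (8 * M * s + κ / 4) ≤ N * (κ / 2) :=
        mul_le_mul_of_nonneg_left (by linarith) (Nat.cast_nonneg _)
      linarith
    gcongr
  unfold Pcal QQ
  rw [← hGdef]
  set L := Leg G (Icc 0 1) ρ
  rw [mul_div_assoc', div_le_div_iff₀ (by positivity) (by positivity)]
  set A := Qnorm G N α
  set B := Qnorm G N β
  have hE : Real.exp (N * (β * ρ - L)) * Real.exp (N * G α) ≤
      Real.exp (-(N * κ)) * (Real.exp (N * (α * ρ - L)) * Real.exp (N * G β)) := by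
    rw [← Real.exp_add, ← Real.exp_add, ← Real.exp_add, Real.exp_le_exp]
    have := mul_le_mul_of_nonneg_left hgap (Nat.cast_nonneg (α := ℝ) N)
    rw [← hGdef, ← hκ] at this
    linarith
  have hA : A * Real.exp (-(N * κ)) ≤ 1 / s * Real.exp (-(κ / 2) * N) * B := by
    have h1 : 1 / s * Real.exp (-(κ / 2) * N) *
        (2 * Real.pi * (s * Real.exp (-(N:ℝ) * (κ / 2)))) = 2 * Real.pi * Real.exp (-(N * κ)) := by
      have : -((N:ℝ) * κ) = -(κ / 2) * N + -(N:ℝ) * (κ / 2) := by ring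
      rw [this, Real.exp_add]
      field_simp
    calc A * Real.exp (-(N * κ)) ≤ 2 * Real.pi * Real.exp (-(N * κ)) := by gcongr
      _ = _ := h1.symm
      _ ≤ _ := by gcongr
  calc Real.exp (N * (β * ρ - L)) * (A * Real.exp (N * G α))
      = A * (Real.exp (N * (β * ρ - L)) * Real.exp (N * G α)) := by ring
    _ ≤ A * (Real.exp (-(N * κ)) * (Real.exp (N * (α * ρ - L)) * Real.exp (N * G β))) := by
        gcongr
    _ = (A * Real.exp (-(N * κ))) * (Real.exp (N * (α * ρ - L)) * Real.exp (N * G β)) := by ring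
    _ ≤ (1 / s * Real.exp (-(κ / 2) * N) * B) *
        (Real.exp (N * (α * ρ - L)) * Real.exp (N * G β)) := by gcongr
    _ = _ := by ring
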